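/- arXiv:math/0601378 — 6 statements merged into one kernel-verified Lean document; each statement's English description precedes it below -/
import Mathlib

section
/- Let E be a complex Banach space, U ⊆ E and V ⊆ ℂ open sets, c ∈ ℂ, R > 0 with the closed ball of radius R around c contained in V, and let F : E × ℂ → ℂ be holomorphic on U ×ˢ (V \ {c}). Then the residue map u ↦ (2πi)⁻¹ · ∮_{|z−c|=R} F(u,z) dz (the circle integral over the circle of radius R around c) is holomorphic on U. -/
/-!
The residue is the integral over `[0, 2π]` of `γ'(θ) F(u, γ(θ))`, where `γ` parametrizes the circle,
which lies in `V \ {c}`. Differentiation under the integral sign applies as soon as the derivative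
of `F` is continuous: its `u`-component is then bounded for `u` near a fixed `u₀`, uniformly on the
compact circle, by the tube lemma, and it is strongly measurable in `θ` although the dual of `E` may
be nonseparable.

Continuity of the derivative of a holomorphic map between normed spaces
(`continuousOn_fderiv_of_differentiableOn`) follows from two applications of the Schwarz lemma: the
first makes the map Lipschitz near each point, and the second, applied to the difference
`w ↦ f (w + h) - f w`, which is therefore `O(‖h‖)`, bounds `‖f'(x + h) - f'(x)‖`.
-/

open Complex Metric

open Set Filter Topology MeasureTheory in
/-- A map between complex normed spaces that is complex differentiable on an open set has a
continuous derivative there. -/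
theorem continuousOn_fderiv_of_differentiableOn
    {G H : Type*} [NormedAddCommGroup G] [NormedSpace ℂ G]
    [NormedAddCommGroup H] [NormedSpace ℂ H] {f : G → H} {W : Set G} (hW : IsOpen W)
    (hf : DifferentiableOn ℂ f W) : ContinuousOn (fderiv ℂ f) W := by
  intro x hx
  apply ContinuousAt.continuousWithinAt
  have hfx : ContinuousAt f x := (hf.differentiableAt (hW.mem_nhds hx)).continuousAt
  obtain ⟨s, hs, hsub⟩ := Metric.mem_nhds_iff.1
    (inter_mem (hW.mem_nhds hx) (hfx (ball_mem_nhds (f x) one_pos)))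
  obtain ⟨r, hr, rfl⟩ : ∃ r : ℝ, 0 < r ∧ s = 2 * r := ⟨s / 2, by positivity, by ring⟩
  have hball : ∀ y ∈ ball x r, ball y r ⊆ ball x (2 * r) := fun y hy ↦
    ball_subset_ball' (by have := mem_ball.1 hy; linarith)
  have hlip : ∀ y ∈ ball x r, ∀ z ∈ ball y r, dist (f z) (f y) ≤ 2 / r * dist z y := by
    intro y hy z hz
    refine Complex.dist_le_div_mul_dist_of_mapsTo_ball
      (hf.mono fun w hw ↦ (hsub (hball y hy hw)).1) ?_ hz
    intro w hw
    have h1 := mem_ball.1 (hsub (hball y hy hw)).2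
    have h2 := mem_ball.1 (hsub (hball y hy (mem_ball_self hr))).2
    have h3 := dist_triangle_right (f w) (f y) (f x)
    exact mem_closedBall.2 (by linarith)
  have hdiff : ∀ y ∈ ball x r, DifferentiableAt ℂ f y := fun y hy ↦
    hf.differentiableAt (hW.mem_nhds (hsub (hball y hy (mem_ball_self hr))).1)
  have hkey : ∀ y ∈ ball x (r / 2),
      dist (fderiv ℂ f y) (fderiv ℂ f x) ≤ 8 / r ^ 2 * dist y x := by
    intro y hy
    obtain ⟨h, rfl⟩ : ∃ h, y = x + h := ⟨y - x, by abel⟩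
    have hh : ‖h‖ < r / 2 := by simpa [mem_ball, dist_eq_norm] using hy
    have hmem : ∀ w ∈ ball x (r / 2), w ∈ ball x r ∧ w + h ∈ ball x r := by
      intro w hw
      have hw' := mem_ball.1 hw
      refine ⟨ball_subset_ball (by linarith) hw, ?_⟩
      rw [mem_ball, dist_eq_norm] at *
      have := norm_add_le (w - x) h
      rw [show w + h - x = w - x + h by abel]
      linarith
    have hdg : ∀ w ∈ ball x (r / 2),
        HasFDerivAt (fun w ↦ f (w + h) - f w) (fderiv ℂ f (w + h) - fderiv ℂ f w) w := by
      intro w hw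
      exact ((hasFDerivAt_comp_add_right h).2 (hdiff _ (hmem w hw).2).hasFDerivAt).sub
        (hdiff _ (hmem w hw).1).hasFDerivAt
    have hgb : ∀ w ∈ ball x (r / 2), ‖f (w + h) - f w‖ ≤ 2 / r * ‖h‖ := by
      intro w hw
      have := hlip w (hmem w hw).1 (w + h) (by
        simp only [mem_ball, dist_self_add_left]; linarith)
      simpa [dist_eq_norm] using this
    have hx2 : x ∈ ball x (r / 2) := mem_ball_self (by positivity)
    have hS := Complex.norm_fderiv_le_div_of_mapsTo_ball (R₂ := 2 * (2 / r * ‖h‖))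
      (fun w hw ↦ (hdg w hw).differentiableAt.differentiableWithinAt)
      (fun w hw ↦ by
        rw [mem_closedBall, dist_eq_norm]
        have := norm_sub_le (f (w + h) - f w) (f (x + h) - f x)
        have := hgb w hw
        have := hgb x hx2
        linarith) (by positivity : 0 < r / 2)
    rw [(hdg x hx2).fderiv] at hS
    rw [dist_eq_norm, dist_self_add_left]
    refine hS.trans_eq ?_
    field_simp
    ring
  exact continuousAt_of_locally_lipschitz (by positivity) _ hkey

open Set Filter Topology MeasureTheory in
/-- Let `E` be a complex Banach space, `U ⊆ E` and `V ⊆ ℂ` open sets,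
`c ∈ ℂ`, `R > 0` with the closed ball of radius `R` around `c` contained in `V`, and
`F : E × ℂ → ℂ` holomorphic on `U ×ˢ (V \ {c})`. Then the residue map
`u ↦ (2πi)⁻¹ * ∮ z in C(c, R), F (u, z)` is holomorphic on `U`. -/
theorem residue_map_holomorphic
    (E : Type*) [NormedAddCommGroup E] [NormedSpace ℂ E] [CompleteSpace E]
    (U : Set E) (V : Set ℂ) (hU : IsOpen U) (hV : IsOpen V)
    (c : ℂ) (R : ℝ) (hR : 0 < R) (hball : closedBall c R ⊆ V)
    (F : E × ℂ → ℂ) (hF : DifferentiableOn ℂ F (U ×ˢ (V \ {c}))) :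
    DifferentiableOn ℂ
      (fun u : E => (2 * Real.pi * I)⁻¹ * ∮ z in C(c, R), F (u, z)) U := by
  intro u₀ hu₀
  apply DifferentiableAt.differentiableWithinAt
  refine DifferentiableAt.const_mul ?_ _
  have hW : IsOpen (U ×ˢ (V \ {c})) := hU.prod (hV.sdiff isClosed_singleton)
  have hγW : ∀ u ∈ U, ∀ θ : ℝ, (u, circleMap c R θ) ∈ U ×ˢ (V \ {c}) := fun u hu θ ↦
    ⟨hu, hball (circleMap_mem_closedBall c hR.le θ), circleMap_ne_center hR.ne'⟩
  have hγ' : Continuous (deriv (circleMap c R)) := by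
    simp only [funext (deriv_circleMap c R)]
    fun_prop
  have hmaps : MapsTo (fun p : E × ℝ ↦ (p.1, circleMap c R p.2)) (U ×ˢ univ)
      (U ×ˢ (V \ {c})) := fun p hp ↦ hγW p.1 hp.1 p.2
  have hcont : Continuous (fun p : E × ℝ ↦ (p.1, circleMap c R p.2)) := by fun_prop
  let g : E → ℝ → ℂ := fun u θ ↦ deriv (circleMap c R) θ • F (u, circleMap c R θ)
  let g' : E → ℝ → E →L[ℂ] ℂ := fun u θ ↦ deriv (circleMap c R) θ •
    (fderiv ℂ F (u, circleMap c R θ)).comp (ContinuousLinearMap.inl ℂ E ℂ)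
  have hg : ContinuousOn (fun p : E × ℝ ↦ g p.1 p.2) (U ×ˢ univ) :=
    (hγ'.comp continuous_snd).continuousOn.smul
      (hF.continuousOn.comp hcont.continuousOn hmaps)
  have hg' : ContinuousOn (fun p : E × ℝ ↦ g' p.1 p.2) (U ×ˢ univ) :=
    (hγ'.comp continuous_snd).continuousOn.smul
      (((continuousOn_fderiv_of_differentiableOn hW hF).comp hcont.continuousOn hmaps).clm_comp
        continuousOn_const)
  have hslice : ∀ u ∈ U, Continuous fun θ : ℝ ↦ (u, θ) := fun u _ ↦ by fun_prop
  have hgu : ∀ u ∈ U, Continuous (g u) := fun u hu ↦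
    hg.comp_continuous (hslice u hu) fun θ ↦ ⟨hu, mem_univ θ⟩
  have hgu' : ∀ u ∈ U, Continuous (g' u) := fun u hu ↦
    hg'.comp_continuous (hslice u hu) fun θ ↦ ⟨hu, mem_univ θ⟩
  have hcpt : IsCompact (Icc 0 (2 * Real.pi)) := isCompact_Icc
  obtain ⟨M, hM⟩ := hcpt.exists_bound_of_continuousOn (hgu' u₀ hu₀).continuousOn
  -- The bound `M` along the slice `u = u₀` persists, up to `1`, on a tube around that slice.
  obtain ⟨A, B, hA, -, huA, hB, hAB⟩ := generalized_tube_lemma (isCompact_singleton (x := u₀)) hcpt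
    (hg'.norm.isOpen_inter_preimage (hU.prod isOpen_univ) (isOpen_Iio (a := M + 1)))
    (by
      rintro ⟨u, θ⟩ ⟨rfl, hθ⟩
      exact ⟨⟨hu₀, mem_univ θ⟩, (hM θ hθ).trans_lt (lt_add_one M)⟩)
  have hΙ : ∀ θ ∈ uIoc 0 (2 * Real.pi), θ ∈ Icc 0 (2 * Real.pi) := fun θ hθ ↦ by
    rw [uIoc_of_le Real.two_pi_pos.le] at hθ
    exact Ioc_subset_Icc_self hθ
  refine (intervalIntegral.hasFDerivAt_integral_of_dominated_of_fderiv_le (F := g) (F' := g')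
    (bound := fun _ ↦ M + 1) (inter_mem (hA.mem_nhds (huA rfl)) (hU.mem_nhds hu₀)) ?_
    ((hgu u₀ hu₀).intervalIntegrable _ _) (hgu' u₀ hu₀).aestronglyMeasurable ?_
    intervalIntegrable_const ?_).differentiableAt
  · filter_upwards [hU.mem_nhds hu₀] with u hu using (hgu u hu).aestronglyMeasurable
  · exact .of_forall fun θ hθ u hu ↦ le_of_lt (hAB ⟨hu.1, hB (hΙ θ hθ)⟩ : (u, θ) ∈ _ ∩ _).2
  · refine .of_forall fun θ _ u hu ↦ ?_
    have h := (hF.differentiableAt (hW.mem_nhds (hγW u hu.2 θ))).hasFDerivAt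
    have h1 : HasFDerivAt (fun v ↦ F (v, circleMap c R θ)) _ u :=
      HasFDerivAt.comp (g := F) u h (hasFDerivAt_prodMk_left u (circleMap c R θ))
    exact h1.const_smul (deriv (circleMap c R) θ)
end

section
/- Let E be a complex Banach space, U ⊆ E and V ⊆ ℂ open, and F : E × ℂ → ℂ holomorphic on U ×ˢ V. Let u₀ ∈ U, z₀ ∈ ℂ, r > 0 with the closed ball of radius r around z₀ contained in V. Assume F(u₀, z) ≠ 0 for every z on the sphere |z − z₀| = r, and that every zero of F(u₀, ·) in the open ball B(z₀, r) is simple (the derivative of z ↦ F(u₀,z) is nonzero there). Then the set Z₀ = {z ∈ B(z₀,r) : F(u₀,z) = 0} is finite, and there is an open neighborhood N ⊆ U of u₀ such that for every u ∈ N, the set {z ∈ B(z₀,r) : F(u,z) = 0} is finite of the same cardinality as Z₀, and all of its elements are simple zeroes of F(u, ·). -/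
/-! The zeroes of `F (u₀, ·)` in the closed disc are isolated, being simple, hence finite in number.
Surround each of them by a small open set, these being pairwise disjoint and inside the disc.

* Near a simple zero (`simple_zero_persists`): holomorphic functions converging locally uniformly
  have converging derivatives, so `∂F/∂z` stays close to its nonzero value `a` at the zero
  (`eventually_norm_deriv_sub_lt`). Therefore `F (u, ·)` expands distances by at least `‖a‖ / 2` on
  a small disc. This gives uniqueness of the zero there and, through the quantitative open mapping
  theorem, its existence as soon as `F (u, c)` is small at the centre `c`.
* On the compact complement of these open sets in the closed disc, `F (u₀, ·)` has no zero, and by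
  compactness neither has `F (u, ·)` for `u` close to `u₀`.

So sending a zero of `F (u₀, ·)` to the unique zero of `F (u, ·)` nearby is a bijection. -/

open Metric

open Filter Topology Set

/-- Joint continuity, at `(u₀, c)`, of the partial derivative in the complex variable. -/
lemma eventually_norm_deriv_sub_lt
    {E : Type*} [NormedAddCommGroup E] [NormedSpace ℂ E]
    {U : Set E} {V : Set ℂ} (hU : IsOpen U) (hV : IsOpen V)
    {F : E × ℂ → ℂ} (hF : DifferentiableOn ℂ F (U ×ˢ V))
    {u₀ : E} (hu₀ : u₀ ∈ U) {c : ℂ} (hc : c ∈ V) {ε : ℝ} (hε : 0 < ε) :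
    ∃ δ > 0, ∀ᶠ u in 𝓝 u₀, ∀ z ∈ ball c δ,
      ‖deriv (fun w => F (u, w)) z - deriv (fun w => F (u₀, w)) c‖ < ε := by
  have hslice : ∀ u ∈ U, DifferentiableOn ℂ (fun w => F (u, w)) V := fun u hu =>
    hF.comp (by fun_prop) (fun w hw => ⟨hu, hw⟩)
  have hlim : TendstoLocallyUniformlyOn (fun u w => F (u, w)) (fun w => F (u₀, w)) (𝓝 u₀) V := by
    rw [Metric.tendstoLocallyUniformlyOn_iff]
    intro η hη z hz
    have hcont : ContinuousAt F (u₀, z) :=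
      hF.continuousOn.continuousAt ((hU.prod hV).mem_nhds ⟨hu₀, hz⟩)
    have h := hcont.eventually (Metric.ball_mem_nhds _ (half_pos hη))
    rw [nhds_prod_eq] at h
    obtain ⟨P, hP, Q, hQ, hPQ⟩ := eventually_prod_iff.mp h
    refine ⟨{w | Q w}, mem_nhdsWithin_of_mem_nhds hQ, hP.mono fun u hu w hw => ?_⟩
    have h1 : dist (F (u, w)) (F (u₀, z)) < η / 2 := hPQ hu hw
    have h2 : dist (F (u₀, w)) (F (u₀, z)) < η / 2 := hPQ hP.self_of_nhds hw
    linarith [dist_triangle_right (F (u₀, w)) (F (u, w)) (F (u₀, z))]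
  have hderiv := hlim.deriv ((hU.eventually_mem hu₀).mono hslice) hV
  rw [Metric.tendstoLocallyUniformlyOn_iff] at hderiv
  obtain ⟨t, ht, htu⟩ := hderiv (ε / 2) (half_pos hε) c hc
  rw [hV.nhdsWithin_eq hc] at ht
  have hdc : ContinuousAt (deriv (fun w => F (u₀, w))) c :=
    ((hslice u₀ hu₀).deriv hV).continuousOn.continuousAt (hV.mem_nhds hc)
  obtain ⟨δ, hδ, hsub⟩ := Metric.mem_nhds_iff.mp
    (inter_mem ht (hdc.eventually (Metric.ball_mem_nhds _ (half_pos hε))))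
  refine ⟨δ, hδ, htu.mono fun u hu z hz => ?_⟩
  have h1 := hu z (hsub hz).1
  have h2 : dist (deriv (fun w => F (u₀, w)) z) (deriv (fun w => F (u₀, w)) c) < ε / 2 :=
    (hsub hz).2
  rw [← dist_eq_norm]
  rw [dist_comm] at h1
  simp only [Function.comp] at h1
  linarith [dist_triangle (deriv (fun w => F (u, w)) z) (deriv (fun w => F (u₀, w)) z)
    (deriv (fun w => F (u₀, w)) c)]

/-- A simple zero `c` of `F (u₀, ·)` has arbitrarily small open neighbourhoods `B`, chosen
independently of `u`, in which `F (u, ·)` has exactly one zero for all `u` close to `u₀`. -/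
lemma simple_zero_persists
    {E : Type*} [NormedAddCommGroup E] [NormedSpace ℂ E]
    {U : Set E} {V : Set ℂ} (hU : IsOpen U) (hV : IsOpen V)
    {F : E × ℂ → ℂ} (hF : DifferentiableOn ℂ F (U ×ˢ V))
    {u₀ : E} (hu₀ : u₀ ∈ U) {c : ℂ} (hc : c ∈ V) (h0 : F (u₀, c) = 0)
    (hd : deriv (fun w => F (u₀, w)) c ≠ 0) {O : Set ℂ} (hO : O ∈ 𝓝 c) :
    ∃ B ⊆ O, IsOpen B ∧ c ∈ B ∧ ∀ᶠ u in 𝓝 u₀,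
      (∃! z, z ∈ B ∧ F (u, z) = 0) ∧ ∀ z ∈ B, deriv (fun w => F (u, w)) z ≠ 0 := by
  set a := deriv (fun w => F (u₀, w)) c with ha
  have hapos : 0 < ‖a‖ := norm_pos_iff.mpr hd
  obtain ⟨δ₁, hδ₁, hev⟩ := eventually_norm_deriv_sub_lt hU hV hF hu₀ hc (half_pos hapos)
  obtain ⟨δ₂, hδ₂, hsub⟩ := Metric.mem_nhds_iff.mp (inter_mem hO (hV.mem_nhds hc))
  obtain ⟨δ, hδ, hle₁, hle₂⟩ : ∃ δ > 0, δ ≤ δ₁ ∧ δ ≤ δ₂ :=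
    ⟨min δ₁ δ₂, lt_min hδ₁ hδ₂, min_le_left _ _, min_le_right _ _⟩
  have hBV : ball c δ ⊆ V := fun z hz => (hsub (ball_subset_ball hle₂ hz)).2
  refine ⟨ball c δ, fun z hz => (hsub (ball_subset_ball hle₂ hz)).1, isOpen_ball,
    mem_ball_self hδ, ?_⟩
  have hcont : ContinuousAt (fun u => F (u, c)) u₀ :=
    ContinuousAt.comp (f := fun u : E => (u, c))
      (hF.continuousOn.continuousAt ((hU.prod hV).mem_nhds ⟨hu₀, hc⟩)) (by fun_prop)
  have hsmall : ∀ᶠ u in 𝓝 u₀, F (u, c) ∈ ball (0 : ℂ) (‖a‖ / 2 * (δ / 2) / 2) := by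
    refine hcont.eventually ?_
    simp only [h0]
    exact Metric.ball_mem_nhds _ (by positivity)
  filter_upwards [hev, hsmall, hU.eventually_mem hu₀] with u hu hus huU
  have hdiff : ∀ z ∈ ball c δ, DifferentiableAt ℂ (fun w => F (u, w)) z := fun z hz =>
    (hF.comp (t := U ×ˢ V) (f := fun w : ℂ => (u, w)) (s := V) (by fun_prop)
      (fun w hw => ⟨huU, hw⟩)).differentiableAt (hV.mem_nhds (hBV hz))
  have hexp : ∀ z ∈ ball c δ, ∀ w ∈ ball c δ,
      ‖a‖ / 2 * ‖z - w‖ ≤ ‖F (u, z) - F (u, w)‖ := by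
    intro z hz w hw
    -- the mean value inequality for `F (u, ·) - a • id`
    have := (convex_ball c δ).norm_image_sub_le_of_norm_hasDerivWithin_le
      (f := fun x => F (u, x) - a * x) (f' := fun x => deriv (fun w => F (u, w)) x - a)
      (C := ‖a‖ / 2)
      (fun x hx => ((hdiff x hx).hasDerivAt.sub
        (by simpa using (hasDerivAt_id x).const_mul a)).hasDerivWithinAt)
      (fun x hx => (hu x (ball_subset_ball hle₁ hx)).le) hw hz
    have h2 : a * (z - w) =
        (F (u, z) - F (u, w)) - ((F (u, z) - a * z) - (F (u, w) - a * w)) := by ring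
    have h3 := norm_sub_le (F (u, z) - F (u, w)) ((F (u, z) - a * z) - (F (u, w) - a * w))
    rw [← h2, norm_mul] at h3
    linarith
  have hinj : ∀ z ∈ ball c δ, ∀ w ∈ ball c δ, F (u, z) = F (u, w) → z = w := by
    intro z hz w hw h
    have := hexp z hz w hw
    rw [h, sub_self, norm_zero] at this
    have h4 : ‖z - w‖ ≤ 0 := by
      by_contra! h5
      nlinarith [mul_pos hapos h5]
    exact sub_eq_zero.mp (norm_le_zero_iff.mp h4)
  have hcl : closedBall c (δ / 2) ⊆ ball c δ := closedBall_subset_ball (by linarith)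
  have himage := DiffContOnCl.ball_subset_image_closedBall (f := fun w => F (u, w))
    (z₀ := c) (r := δ / 2) (ε := ‖a‖ / 2 * (δ / 2))
    (DifferentiableOn.diffContOnCl fun z hz =>
      (hdiff z (hcl (closure_ball_subset_closedBall hz))).differentiableWithinAt)
    (half_pos hδ)
    (fun z hz => by
      have := hexp z (hcl (sphere_subset_closedBall hz)) c (mem_ball_self hδ)
      rwa [mem_sphere_iff_norm.mp hz] at this)
    (by
      have : ∀ᶠ z in 𝓝[≠] c, F (u, z) ≠ F (u, c) := by
        filter_upwards [self_mem_nhdsWithin,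
          mem_nhdsWithin_of_mem_nhds (Metric.ball_mem_nhds c hδ)] with z hz hzB h
        exact hz (hinj z hzB c (mem_ball_self hδ) h)
      exact this.frequently.filter_mono nhdsWithin_le_nhds)
  obtain ⟨z, hz, hz0⟩ := himage (mem_ball_comm.mp hus)
  refine ⟨⟨z, ⟨hcl hz, hz0⟩, fun w hw => hinj w hw.1 z (hcl hz) (hw.2.trans hz0.symm)⟩, ?_⟩
  intro w hw hw0
  have := hu w (ball_subset_ball hle₁ hw)
  rw [hw0, zero_sub, norm_neg] at this
  linarith

/-- For a family `F : E × ℂ → ℂ` holomorphic on `U ×ˢ V` whose member at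
`u₀` has no zeroes on the sphere `|z - z₀| = r` and only simple zeroes in the open ball
`B(z₀, r)`, the zero set `Z₀` in the ball is finite, and for all `u` in a neighborhood of
`u₀` the zero set of `F (u, ·)` in the ball is finite of the same cardinality and consists
of simple zeroes. -/
theorem simple_zero_count_locally_constant
    (E : Type*) [NormedAddCommGroup E] [NormedSpace ℂ E] [CompleteSpace E]
    (U : Set E) (V : Set ℂ) (hU : IsOpen U) (hV : IsOpen V)
    (F : E × ℂ → ℂ) (hF : DifferentiableOn ℂ F (U ×ˢ V))
    (u₀ : E) (hu₀ : u₀ ∈ U) (z₀ : ℂ) (r : ℝ) (hr : 0 < r)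
    (hball : closedBall z₀ r ⊆ V)
    (hsphere : ∀ z ∈ sphere z₀ r, F (u₀, z) ≠ 0)
    (hsimple : ∀ z ∈ ball z₀ r, F (u₀, z) = 0 → deriv (fun w => F (u₀, w)) z ≠ 0) :
    ({z ∈ ball z₀ r | F (u₀, z) = 0}).Finite ∧
      ∃ N : Set E, IsOpen N ∧ u₀ ∈ N ∧ N ⊆ U ∧
        ∀ u ∈ N,
          ({z ∈ ball z₀ r | F (u, z) = 0}).Finite ∧
          ({z ∈ ball z₀ r | F (u, z) = 0}).ncard
            = ({z ∈ ball z₀ r | F (u₀, z) = 0}).ncard ∧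
          ∀ z ∈ ball z₀ r, F (u, z) = 0 → deriv (fun w => F (u, w)) z ≠ 0 := by
  set Z₀ : Set ℂ := {z ∈ ball z₀ r | F (u₀, z) = 0} with hZ₀
  have hcontF : ∀ z ∈ closedBall z₀ r, ContinuousAt F (u₀, z) := fun z hz =>
    hF.continuousOn.continuousAt ((hU.prod hV).mem_nhds ⟨hu₀, hball hz⟩)
  have hcontF₀ : ∀ z ∈ closedBall z₀ r, ContinuousAt (fun w => F (u₀, w)) z := fun z hz =>
    ContinuousAt.comp (f := fun w : ℂ => (u₀, w)) (hcontF z hz) (by fun_prop)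
  -- the sphere carries no zero, so `Z₀` is also the zero set in the compact disc
  have hmem : ∀ z ∈ closedBall z₀ r, F (u₀, z) = 0 → z ∈ Z₀ := by
    intro z hz h
    refine ⟨lt_of_le_of_ne hz fun h' => hsphere z h' h, h⟩
  have hfin : Z₀.Finite := by
    by_contra hinf
    obtain ⟨c, hcK, hacc⟩ := Set.Infinite.exists_accPt_of_subset_isCompact hinf
      (isCompact_closedBall z₀ r) (fun z hz => ball_subset_closedBall hz.1)
    rw [accPt_iff_frequently] at hacc
    by_cases h : F (u₀, c) = 0
    · obtain ⟨B, -, hBo, hcB, hB⟩ := simple_zero_persists hU hV hF hu₀ (hball hcK) h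
        (hsimple c (hmem c hcK h).1 h) univ_mem
      obtain ⟨z, ⟨hzc, hz⟩, hzB⟩ := (hacc.and_eventually (hBo.mem_nhds hcB)).exists
      exact hzc (hB.self_of_nhds.1.unique ⟨hzB, hz.2⟩ ⟨hcB, h⟩)
    · obtain ⟨z, ⟨-, hz⟩, hz'⟩ :=
        (hacc.and_eventually ((hcontF₀ c hcK).eventually_ne h)).exists
      exact hz' hz.2
  refine ⟨hfin, ?_⟩
  obtain ⟨W, hW, hWd⟩ := hfin.t2_separation
  have hloc : ∀ c ∈ Z₀, ∃ B ⊆ W c ∩ ball z₀ r, IsOpen B ∧ c ∈ B ∧ ∀ᶠ u in 𝓝 u₀,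
      (∃! z, z ∈ B ∧ F (u, z) = 0) ∧ ∀ z ∈ B, deriv (fun w => F (u, w)) z ≠ 0 := fun c hc =>
    simple_zero_persists hU hV hF hu₀ (hball (ball_subset_closedBall hc.1)) hc.2
      (hsimple c hc.1 hc.2)
      (inter_mem ((hW c).2.mem_nhds (hW c).1) (isOpen_ball.mem_nhds hc.1))
  choose! B hBsub hBo hcB hB using hloc
  have hcompact : IsCompact (closedBall z₀ r \ ⋃ c ∈ Z₀, B c) :=
    (isCompact_closedBall z₀ r).diff (isOpen_biUnion hBo)
  have hout : ∀ᶠ u in 𝓝 u₀, ∀ z ∈ closedBall z₀ r \ ⋃ c ∈ Z₀, B c, F (u, z) ≠ 0 := by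
    refine hcompact.eventually_forall_of_forall_eventually fun z hz => ?_
    refine (hcontF z hz.1).eventually_ne fun h => hz.2 ?_
    have hzZ := hmem z hz.1 h
    exact mem_biUnion hzZ (hcB z hzZ)
  have hall := (hout.and ((hfin.eventually_all).mpr hB)).and (hU.eventually_mem hu₀)
  obtain ⟨N, hN, hNo, hu₀N⟩ := _root_.eventually_nhds_iff.mp hall
  refine ⟨N, hNo, hu₀N, fun u hu => (hN u hu).2, fun u hu => ?_⟩
  obtain ⟨⟨hne, hloc⟩, -⟩ := hN u hu
  have hcover : ∀ z ∈ ball z₀ r, F (u, z) = 0 → ∃ c ∈ Z₀, z ∈ B c := by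
    intro z hz h
    by_contra hcon
    refine hne z ⟨ball_subset_closedBall hz, fun hmemU => hcon ?_⟩ h
    simpa using hmemU
  choose! g hg hguniq using fun c hc => (hloc c hc).1
  have hbij : BijOn g Z₀ {z ∈ ball z₀ r | F (u, z) = 0} := by
    refine ⟨fun c hc => ⟨(hBsub c hc (hg c hc).1).2, (hg c hc).2⟩, fun c hc d hd hcd => ?_, ?_⟩
    · by_contra hcd'
      exact (Set.disjoint_left.mp (hWd hc hd hcd')) (hBsub c hc (hg c hc).1).1
        (hcd ▸ (hBsub d hd (hg d hd).1).1)
    · rintro z ⟨hz, hz0⟩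
      obtain ⟨c, hc, hzc⟩ := hcover z hz hz0
      exact ⟨c, hc, (hguniq c hc z ⟨hzc, hz0⟩).symm⟩
  refine ⟨hbij.image_eq ▸ hfin.image g, hbij.ncard_eq.symm, fun z hz hz0 => ?_⟩
  obtain ⟨c, hc, hzc⟩ := hcover z hz hz0
  exact (hloc c hc).2 z hzc
end

section
/- Let E be a complex Banach space, U ⊆ E and V ⊆ ℂ open, and F : E × ℂ → ℂ holomorphic on U ×ˢ V. Let u₀ ∈ U, z₀ ∈ ℂ, r > 0 with the closed ball of radius r around z₀ contained in V. Assume F(u₀, z) ≠ 0 for every z on the sphere |z − z₀| = r, and that every zero of F(u₀, ·) in the open ball B(z₀, r) is simple. Let k be the (finite) number of zeroes of F(u₀, ·) in B(z₀, r). Then there exist an open neighborhood N ⊆ U of u₀ and maps g₁, …, g_k : E → ℂ, each holomorphic on N, such that g₁(u), …, g_k(u) are pairwise distinct for every u ∈ N, and for every u ∈ N the set {z ∈ B(z₀, r) : F(u, z) = 0} equals {g₁(u), …, g_k(u)}. -/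
/-!
A Fréchet-holomorphic scalar map on an open subset of a complex normed space is `C¹`
(`continuousOn_fderiv_of_holomorphic`): near `p` the remainder `f x - f'(p) (x - p)` oscillates by
`o(δ)` on balls of radius comparable to `δ`, and the Schwarz lemma turns this into the bound
`‖f'(x) - f'(p)‖ = o(1)`. Hence the `C¹` implicit function theorem applies at each simple zero
(`exists_local_zero_function`), giving a holomorphic branch `g` such that near that zero
`F (u, w) = 0` exactly when `g u = w`.

No other zeroes appear: each point `(u₀, z)` with `z` in the closed ball has a neighborhood in
which every zero of `F` lies on one of the branches, and compactness of the closed ball makes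
the neighborhood of `u₀` uniform in `z`. The remaining claims (the branches stay in the open ball,
stay distinct, and consist of zeroes) hold near `u₀` by continuity.
-/

open Metric

open Filter Topology

/-- Scalar holomorphic maps on open sets are `C¹`; this supplies the `C¹` hypothesis of the
implicit function theorem. -/
lemma continuousOn_fderiv_of_holomorphic {G : Type*} [NormedAddCommGroup G] [NormedSpace ℂ G]
    {f : G → ℂ} {s : Set G} (hs : IsOpen s) (hf : DifferentiableOn ℂ f s) :
    ContinuousOn (fderiv ℂ f) s := by
  intro p hp
  refine ContinuousAt.continuousWithinAt ?_
  rw [Metric.continuousAt_iff']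
  intro ε hε
  have hfp : DifferentiableAt ℂ f p := hf.differentiableAt (hs.mem_nhds hp)
  have hlo := hfp.hasFDerivAt.isLittleO.def (show (0 : ℝ) < ε / 5 by positivity)
  obtain ⟨ρ, hρ, hball⟩ := Metric.eventually_nhds_iff_ball.1 (hlo.and (hs.mem_nhds hp))
  filter_upwards [ball_mem_nhds p (half_pos hρ)] with x hx
  set L := fderiv ℂ f p with hL
  have hsub : ball x (ρ / 2) ⊆ ball p ρ := by
    refine ball_subset_ball' ?_
    have := mem_ball.1 hx
    linarith
  have hxρ : x ∈ ball p ρ := hsub (mem_ball_self (half_pos hρ))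
  -- `R` is `f` minus its linear part at `p`, so that `R' x = f' x - f' p`.
  let R : G → ℂ := fun y => f y - L y
  have hR : ∀ y ∈ ball p ρ, ‖R y - R p‖ ≤ ε / 5 * ρ := by
    intro y hy
    have h1 := (hball y hy).1
    have h2 : ‖y - p‖ ≤ ρ := by rw [← dist_eq_norm]; exact (mem_ball.1 hy).le
    have h3 : R y - R p = f y - f p - L (y - p) := by
      simp only [R, map_sub]; ring
    rw [h3]
    exact h1.trans (by gcongr)
  have hdR : DifferentiableOn ℂ R (ball x (ρ / 2)) :=
    (hf.mono fun y hy => (hball y (hsub hy)).2).sub L.differentiable.differentiableOn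
  have hmaps : Set.MapsTo R (ball x (ρ / 2)) (closedBall (R x) (2 * (ε / 5 * ρ))) := by
    intro y hy
    rw [mem_closedBall, dist_eq_norm]
    have h1 := hR y (hsub hy)
    have h2 := hR x hxρ
    calc ‖R y - R x‖ = ‖(R y - R p) - (R x - R p)‖ := by congr 1; ring
      _ ≤ ‖R y - R p‖ + ‖R x - R p‖ := norm_sub_le _ _
      _ ≤ _ := by linarith
  have key := Complex.norm_fderiv_le_div_of_mapsTo_ball hdR hmaps (half_pos hρ)
  have hfx : DifferentiableAt ℂ f x := hf.differentiableAt (hs.mem_nhds (hball x hxρ).2)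
  have hfd : fderiv ℂ R x = fderiv ℂ f x - L :=
    (hfx.hasFDerivAt.sub L.hasFDerivAt).fderiv
  rw [hfd] at key
  rw [dist_eq_norm]
  have : 2 * (ε / 5 * ρ) / (ρ / 2) = 4 / 5 * ε := by field_simp; ring
  linarith

/-- Near a simple zero `a` of `F (u₀, ·)`, the zero set of `F` is the graph of a function of the
parameter which is holomorphic near `u₀`. -/
lemma exists_local_zero_function {E : Type*} [NormedAddCommGroup E] [NormedSpace ℂ E]
    [CompleteSpace E] {F : E × ℂ → ℂ} {s : Set (E × ℂ)} (hs : IsOpen s)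
    (hF : DifferentiableOn ℂ F s) {u₀ : E} {a : ℂ} (hmem : (u₀, a) ∈ s)
    (hzero : F (u₀, a) = 0) (hder : deriv (fun w => F (u₀, w)) a ≠ 0) :
    ∃ g : E → ℂ, g u₀ = a ∧ (∀ᶠ u in 𝓝 u₀, DifferentiableAt ℂ g u) ∧
      (∀ᶠ u in 𝓝 u₀, F (u, g u) = 0) ∧
      ∀ᶠ p : E × ℂ in 𝓝 (u₀, a), F p = 0 → g p.1 = p.2 := by
  have hC1on : ContDiffOn ℂ 1 F s := by
    rw [← zero_add (1 : WithTop ℕ∞), contDiffOn_succ_iff_fderiv_of_isOpen hs]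
    exact ⟨hF, by simp, contDiffOn_zero.2 (continuousOn_fderiv_of_holomorphic hs hF)⟩
  have hC1 : ContDiffAt ℂ 1 F (u₀, a) := hC1on.contDiffAt (hs.mem_nhds hmem)
  have hFa : HasFDerivAt F (fderiv ℂ F (u₀, a)) (u₀, a) :=
    (hF.differentiableAt (hs.mem_nhds hmem)).hasFDerivAt
  have hpart : HasFDerivAt (fun w => F (u₀, w))
      (fderiv ℂ F (u₀, a) ∘L ContinuousLinearMap.inr ℂ E ℂ) a :=
    HasFDerivAt.comp a hFa (hasFDerivAt_prodMk_right u₀ a)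
  have hval : (fderiv ℂ F (u₀, a) ∘L ContinuousLinearMap.inr ℂ E ℂ) 1 ≠ 0 := by
    rwa [← hpart.hasDerivAt.deriv]
  have hinv : (fderiv ℂ F (u₀, a) ∘L ContinuousLinearMap.inr ℂ E ℂ).IsInvertible := by
    set T := fderiv ℂ F (u₀, a) ∘L ContinuousLinearMap.inr ℂ E ℂ
    refine ⟨ContinuousLinearEquiv.unitsEquivAut ℂ (Units.mk0 (T 1) hval), ?_⟩
    ext
    simp
  refine ⟨hC1.implicitFunction one_ne_zero hinv,
    hC1.implicitFunction_apply_self one_ne_zero hinv, ?_, ?_, ?_⟩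
  · filter_upwards [(hC1.contDiffAt_implicitFunction one_ne_zero hinv).eventually (by simp)]
      with u hu using hu.differentiableAt one_ne_zero
  · filter_upwards [hC1.eventually_apply_implicitFunction one_ne_zero hinv] with u hu
    rw [hu, hzero]
  · filter_upwards [hC1.eventually_apply_eq_iff_implicitFunction one_ne_zero hinv] with p hp h0
    exact hp.1 (h0.trans hzero.symm)

/-- Under the hypotheses of Statement 3, with `k` the number of zeroes of
`F (u₀, ·)` in `B(z₀, r)`, there is a neighborhood `N` of `u₀` and holomorphic functions
`g₁, …, g_k` on `N`, pairwise distinct at every `u ∈ N`, whose values enumerate the zeroes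
of `F (u, ·)` in `B(z₀, r)` for every `u ∈ N`. -/
theorem simple_zeroes_vary_holomorphically
    (E : Type*) [NormedAddCommGroup E] [NormedSpace ℂ E] [CompleteSpace E]
    (U : Set E) (V : Set ℂ) (hU : IsOpen U) (hV : IsOpen V)
    (F : E × ℂ → ℂ) (hF : DifferentiableOn ℂ F (U ×ˢ V))
    (u₀ : E) (hu₀ : u₀ ∈ U) (z₀ : ℂ) (r : ℝ) (hr : 0 < r)
    (hball : closedBall z₀ r ⊆ V)
    (hsphere : ∀ z ∈ sphere z₀ r, F (u₀, z) ≠ 0)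
    (hsimple : ∀ z ∈ ball z₀ r, F (u₀, z) = 0 → deriv (fun w => F (u₀, w)) z ≠ 0)
    (k : ℕ) (hfin : ({z ∈ ball z₀ r | F (u₀, z) = 0}).Finite)
    (hk : ({z ∈ ball z₀ r | F (u₀, z) = 0}).ncard = k) :
    ∃ N : Set E, IsOpen N ∧ u₀ ∈ N ∧ N ⊆ U ∧
      ∃ g : Fin k → E → ℂ,
        (∀ i, DifferentiableOn ℂ (g i) N) ∧
        (∀ u ∈ N, Function.Injective (fun i : Fin k => g i u)) ∧
        (∀ u ∈ N, {z ∈ ball z₀ r | F (u, z) = 0} = Set.range (fun i : Fin k => g i u)) := by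
  set S : Set ℂ := {z ∈ ball z₀ r | F (u₀, z) = 0} with hS
  have hopen : IsOpen (U ×ˢ V) := hU.prod hV
  have hmemV : ∀ z ∈ closedBall z₀ r, (u₀, z) ∈ U ×ˢ V := fun z hz => ⟨hu₀, hball hz⟩
  have : Finite S := hfin
  let e : S ≃ Fin k := Finite.equivFinOfCardEq hk
  let a : Fin k → ℂ := fun i => (e.symm i : ℂ)
  have haS : ∀ i, a i ∈ S := fun i => (e.symm i).2
  have hainj : Function.Injective a := Subtype.val_injective.comp e.symm.injective
  choose g hga hgdiff hgzero hguniq using fun i =>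
    exists_local_zero_function hopen hF (hmemV _ (ball_subset_closedBall (haS i).1))
      (haS i).2 (hsimple _ (haS i).1 (haS i).2)
  have hgcont : ∀ i, ContinuousAt (g i) u₀ := fun i => (hgdiff i).self_of_nhds.continuousAt
  have hno_other : ∀ᶠ u in 𝓝 u₀, ∀ z ∈ closedBall z₀ r, F (u, z) = 0 → ∃ i, g i u = z := by
    refine (isCompact_closedBall z₀ r).eventually_forall_of_forall_eventually
      (P := fun u z => F (u, z) = 0 → ∃ i, g i u = z) fun z hz => ?_
    by_cases h0 : F (u₀, z) = 0
    · have hzS : z ∈ S := by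
        refine ⟨?_, h0⟩
        rcases (mem_closedBall.1 hz).lt_or_eq with h | h
        · exact h
        · exact absurd h0 (hsphere z h)
      have haz : a (e ⟨z, hzS⟩) = z := by simp [a]
      have := hguniq (e ⟨z, hzS⟩)
      rw [haz] at this
      filter_upwards [this] with p hp hp0 using ⟨_, hp hp0⟩
    · have hc : ContinuousAt F (u₀, z) :=
        (hF.differentiableAt (hopen.mem_nhds (hmemV z hz))).continuousAt
      filter_upwards [hc.eventually_ne h0] with p hp hp0 using absurd hp0 hp
  have hin : ∀ᶠ u in 𝓝 u₀, ∀ i, g i u ∈ ball z₀ r :=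
    eventually_all.2 fun i => (hgcont i).eventually_mem
      (isOpen_ball.mem_nhds (by rw [hga]; exact (haS i).1))
  have hdist : ∀ᶠ u in 𝓝 u₀, ∀ i j, i ≠ j → g i u ≠ g j u := by
    refine eventually_all.2 fun i => eventually_all.2 fun j => ?_
    by_cases hij : i = j
    · exact Eventually.of_forall fun u h => absurd hij h
    · have hne : g i u₀ ≠ g j u₀ := by rw [hga, hga]; exact hainj.ne hij
      filter_upwards [((hgcont i).sub (hgcont j)).eventually_ne (sub_ne_zero.2 hne)]
        with u hu _ using sub_ne_zero.1 hu
  have hall := (hU.eventually_mem hu₀).and <| hno_other.and <| hin.and <| hdist.and <|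
    (eventually_all.2 hgdiff).and (eventually_all.2 hgzero)
  obtain ⟨N, hN, hNo, huN⟩ := _root_.eventually_nhds_iff.1 hall
  refine ⟨N, hNo, huN, fun u hu => (hN u hu).1, g,
    fun i u hu => ((hN u hu).2.2.2.2.1 i).differentiableWithinAt, fun u hu i j hij => ?_,
    fun u hu => ?_⟩
  · by_contra h
    exact (hN u hu).2.2.2.1 i j h hij
  · obtain ⟨-, hno, hi, -, -, hz⟩ := hN u hu
    ext z
    constructor
    · rintro ⟨hzb, hz0⟩
      exact hno z (ball_subset_closedBall hzb) hz0
    · rintro ⟨i, rfl⟩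
      exact ⟨hi i, hz i⟩
end

section
/- Let E be a complex Banach space, U ⊆ E open, F : E × ℂ → ℂ holomorphic on U ×ˢ ℂ (i.e., ℂ-differentiable at every point (u,z) with u ∈ U), and let a, b : E → ℂ be holomorphic on U. Then the map u ↦ ∫_{t=0}^{1} F(u, a(u) + t·(b(u) − a(u))) · (b(u) − a(u)) dt (the integral of F(u, ·) over the straight segment from a(u) to b(u)) is holomorphic on U. -/
/-!
The integrand extends to `G (u, t) = F (u, a u + t * (b u - a u)) * (b u - a u)`, which is
holomorphic on `U ×ˢ ℂ`, so the claim is differentiation under the integral sign over the compact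
interval `[0, 1]`. The domination and measurability hypotheses require the Fréchet derivative of `G`
to be continuous, and the parameter space may be infinite dimensional, so this is proved directly:
a holomorphic map on an open subset of a Banach space is locally bounded, hence by the Schwarz lemma
its derivative is locally bounded and it is locally Lipschitz (`exists_lipschitz_ball`). The Schwarz
lemma applied to the small holomorphic function `y ↦ g (y + h) - g y` then bounds
`fderiv g (x + h) - fderiv g x` by a multiple of `‖h‖` (`continuousOn_fderiv_of_holomorphic`).
-/

open Set Filter Topology Metric MeasureTheory

/-- Cauchy estimate at the center of a ball, for a holomorphic function on a normed space. -/
lemma norm_fderiv_le_of_norm_le {X : Type*} [NormedAddCommGroup X] [NormedSpace ℂ X]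
    {g : X → ℂ} {c : X} {R M : ℝ} (hR : 0 < R) (hd : DifferentiableOn ℂ g (ball c R))
    (hM : ∀ y ∈ ball c R, ‖g y‖ ≤ M) : ‖fderiv ℂ g c‖ ≤ 2 * M / R := by
  refine Complex.norm_fderiv_le_div_of_mapsTo_ball hd (fun y hy => ?_) hR
  rw [mem_closedBall, dist_eq_norm]
  linarith [norm_sub_le (g y) (g c), hM y hy, hM c (mem_ball_self hR)]

lemma exists_lipschitz_ball {X : Type*} [NormedAddCommGroup X] [NormedSpace ℂ X]
    {g : X → ℂ} {V : Set X} (hV : IsOpen V) (hg : DifferentiableOn ℂ g V) {x : X} (hx : x ∈ V) :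
    ∃ r > 0, ∃ C : ℝ, ball x r ⊆ V ∧
      ∀ y ∈ ball x r, ∀ z ∈ ball x r, ‖g z - g y‖ ≤ C * ‖z - y‖ := by
  have hcont : ContinuousAt g x := (hg.differentiableAt (hV.mem_nhds hx)).continuousAt
  have hb : ∀ᶠ y in 𝓝 x, y ∈ V ∧ ‖g y‖ < ‖g x‖ + 1 :=
    (hV.eventually_mem hx).and (hcont.norm.eventually (gt_mem_nhds (lt_add_one _)))
  obtain ⟨R, hR, hball⟩ := Metric.eventually_nhds_iff_ball.1 hb
  refine ⟨R / 2, half_pos hR, 2 * (‖g x‖ + 1) / (R / 2),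
    fun y hy => (hball y (ball_subset_ball (by linarith) hy)).1, fun y hy z hz => ?_⟩
  refine (convex_ball x (R / 2)).norm_image_sub_le_of_norm_fderiv_le (𝕜 := ℂ)
    (fun w hw => ?_) (fun w hw => ?_) hy hz
  · exact hg.differentiableAt
      (hV.mem_nhds (hball w (ball_subset_ball (by linarith) hw)).1)
  · have hsub : ball w (R / 2) ⊆ ball x R :=
      ball_subset_ball' (by linarith [mem_ball.1 hw])
    exact norm_fderiv_le_of_norm_le (half_pos hR) (hg.mono fun v hv => (hball v (hsub hv)).1)
      fun v hv => (hball v (hsub hv)).2.le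

lemma continuousOn_fderiv_of_holomorphic_s5 {X : Type*} [NormedAddCommGroup X] [NormedSpace ℂ X]
    {g : X → ℂ} {V : Set X} (hV : IsOpen V) (hg : DifferentiableOn ℂ g V) :
    ContinuousOn (fderiv ℂ g) V := by
  intro x hx
  refine ContinuousAt.continuousWithinAt ?_
  obtain ⟨r, hr, C, hrV, hlip⟩ := exists_lipschitz_ball hV hg hx
  have hr2 : 0 < r / 2 := half_pos hr
  have hgd : ∀ y ∈ ball x r, DifferentiableAt ℂ g y := fun y hy =>
    hg.differentiableAt (hV.mem_nhds (hrV hy))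
  have key : ∀ y ∈ ball x (r / 2),
      ‖fderiv ℂ g y - fderiv ℂ g x‖ ≤ 2 * (C * ‖y - x‖) / (r / 2) := by
    intro y hy
    have h1 : ∀ w ∈ ball x (r / 2), w ∈ ball x r ∧ w + (y - x) ∈ ball x r := by
      intro w hw
      rw [mem_ball, dist_eq_norm] at hw hy
      refine ⟨by rw [mem_ball, dist_eq_norm]; linarith, ?_⟩
      rw [mem_ball, dist_eq_norm, add_sub_right_comm]
      linarith [norm_add_le (w - x) (y - x)]
    have hshift : ∀ w ∈ ball x (r / 2),
        HasFDerivAt (fun v => g (v + (y - x)) - g v)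
          (fderiv ℂ g (w + (y - x)) - fderiv ℂ g w) w := fun w hw =>
      ((hasFDerivAt_comp_add_right (y - x)).2 (hgd _ (h1 w hw).2).hasFDerivAt).sub
        (hgd _ (h1 w hw).1).hasFDerivAt
    have h2 := norm_fderiv_le_of_norm_le (g := fun v => g (v + (y - x)) - g v) (c := x)
      (M := C * ‖y - x‖) hr2
      (fun w hw => (hshift w hw).differentiableAt.differentiableWithinAt)
      (fun w hw => by simpa using hlip w (h1 w hw).1 _ (h1 w hw).2)
    rw [(hshift x (mem_ball_self hr2)).fderiv] at h2
    simpa using h2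
  rw [ContinuousAt, tendsto_iff_norm_sub_tendsto_zero]
  refine squeeze_zero' (Eventually.of_forall fun _ => norm_nonneg _)
    (mem_of_superset (ball_mem_nhds x hr2) key) ?_
  have hc : Continuous fun y : X => 2 * (C * ‖y - x‖) / (r / 2) := by fun_prop
  simpa using hc.tendsto x

/-- Differentiation under the integral sign for a holomorphic function of parameter and variable. -/
lemma differentiableOn_integral_of_holomorphic {E : Type*} [NormedAddCommGroup E]
    [NormedSpace ℂ E] {U : Set E} (hU : IsOpen U) {G : E × ℂ → ℂ}
    (hG : DifferentiableOn ℂ G (U ×ˢ (univ : Set ℂ))) :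
    DifferentiableOn ℂ (fun u => ∫ t in (0 : ℝ)..1, G (u, (t : ℂ))) U := by
  intro u hu
  refine DifferentiableAt.differentiableWithinAt ?_
  have hV : IsOpen (U ×ˢ (univ : Set ℂ)) := hU.prod isOpen_univ
  have hGd : ∀ x ∈ U, ∀ t : ℝ, DifferentiableAt ℂ G (x, (t : ℂ)) := fun x hx t =>
    hG.differentiableAt (hV.mem_nhds ⟨hx, mem_univ _⟩)
  have hG' : ∀ x ∈ U, ∀ t : ℝ, ContinuousAt (fderiv ℂ G) (x, (t : ℂ)) := fun x hx t =>
    (continuousOn_fderiv_of_holomorphic_s5 hV hG).continuousAt (hV.mem_nhds ⟨hx, mem_univ _⟩)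
  let F' : E → ℝ → E →L[ℂ] ℂ := fun x t =>
    (fderiv ℂ G (x, (t : ℂ))).comp (ContinuousLinearMap.inl ℂ E ℂ)
  have hF'c : ∀ x ∈ U, ∀ t : ℝ, ContinuousAt (fun p : E × ℝ => F' p.1 p.2) (x, t) := by
    intro x hx t
    have h1 : ContinuousAt (fun p : E × ℝ => fderiv ℂ G (p.1, (p.2 : ℂ))) (x, t) :=
      ContinuousAt.comp (g := fderiv ℂ G) (f := fun p : E × ℝ => (p.1, (p.2 : ℂ)))
        (hG' x hx t) (by fun_prop)
    exact h1.clm_comp continuousAt_const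
  have hF'u : Continuous (F' u) := continuous_iff_continuousAt.2 fun t =>
    ContinuousAt.comp (g := fun p : E × ℝ => F' p.1 p.2) (f := fun s : ℝ => (u, s))
      (hF'c u hu t) (by fun_prop)
  have hGc : ∀ x ∈ U, Continuous fun t : ℝ => G (x, (t : ℂ)) := fun x hx =>
    continuous_iff_continuousAt.2 fun t =>
      ContinuousAt.comp (g := G) (f := fun s : ℝ => (x, (s : ℂ)))
        (hGd x hx t).continuousAt (by fun_prop)
  obtain ⟨M, hM⟩ := (isCompact_Icc (a := (0 : ℝ)) (b := 1)).exists_bound_of_continuousOn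
    hF'u.continuousOn
  -- By compactness of `[0, 1]`, the bound at `u` persists, up to `1`, on a neighborhood of `u`.
  have hbound : ∀ᶠ x in 𝓝 u, ∀ t ∈ Icc (0 : ℝ) 1, ‖F' x t‖ < M + 1 :=
    isCompact_Icc.eventually_forall_of_forall_eventually fun t ht =>
      (hF'c u hu t).norm.eventually (gt_mem_nhds (by linarith [hM t ht]))
  have hIoc : ∀ t ∈ uIoc (0 : ℝ) 1, t ∈ Icc (0 : ℝ) 1 := fun t ht => by
    rw [uIoc_of_le zero_le_one] at ht
    exact Ioc_subset_Icc_self ht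
  refine (intervalIntegral.hasFDerivAt_integral_of_dominated_of_fderiv_le
    (F := fun x (t : ℝ) => G (x, (t : ℂ))) (F' := F') (bound := fun _ => M + 1)
    (hbound.and (hU.eventually_mem hu)) ?_ ?_ ?_ ?_ ?_ ?_).differentiableAt
  · filter_upwards [hU.mem_nhds hu] with x hx
    exact (hGc x hx).aestronglyMeasurable
  · exact (hGc u hu).intervalIntegrable _ _
  · exact hF'u.aestronglyMeasurable
  · exact Eventually.of_forall fun t ht x hx => (hx.1 t (hIoc t ht)).le
  · exact intervalIntegrable_const
  · exact Eventually.of_forall fun t _ x hx =>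
      (hGd x hx.2 t).hasFDerivAt.comp x (hasFDerivAt_prodMk_left x (t : ℂ))

/-- Let `E` be a complex Banach space, `U ⊆ E` open, `F : E × ℂ → ℂ`
holomorphic on `U ×ˢ ℂ`, and `a b : E → ℂ` holomorphic on `U`. Then the map
`u ↦ ∫ t in 0..1, F (u, a u + t * (b u - a u)) * (b u - a u)` (the integral of `F (u, ·)`
over the straight segment from `a u` to `b u`) is holomorphic on `U`. -/
theorem segment_integral_holomorphic
    (E : Type*) [NormedAddCommGroup E] [NormedSpace ℂ E] [CompleteSpace E]
    (U : Set E) (hU : IsOpen U)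
    (F : E × ℂ → ℂ) (hF : DifferentiableOn ℂ F (U ×ˢ (Set.univ : Set ℂ)))
    (a b : E → ℂ) (ha : DifferentiableOn ℂ a U) (hb : DifferentiableOn ℂ b U) :
    DifferentiableOn ℂ
      (fun u : E =>
        ∫ t in (0:ℝ)..1, F (u, a u + (t : ℂ) * (b u - a u)) * (b u - a u)) U := by
  have hfst : MapsTo Prod.fst (U ×ˢ (univ : Set ℂ)) U := fun p hp => hp.1
  have ha' : DifferentiableOn ℂ (fun p : E × ℂ => a p.1) (U ×ˢ (univ : Set ℂ)) :=
    ha.comp differentiableOn_fst hfst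
  have hb' : DifferentiableOn ℂ (fun p : E × ℂ => b p.1) (U ×ˢ (univ : Set ℂ)) :=
    hb.comp differentiableOn_fst hfst
  refine differentiableOn_integral_of_holomorphic hU
    (G := fun p => F (p.1, a p.1 + p.2 * (b p.1 - a p.1)) * (b p.1 - a p.1)) ?_
  refine DifferentiableOn.mul ?_ (hb'.sub ha')
  exact hF.comp (differentiableOn_fst.prodMk
    (ha'.add (differentiableOn_snd.mul (hb'.sub ha')))) fun p hp => ⟨hp.1, mem_univ _⟩
end

section
/- Let U ⊆ ℂ be open and connected, and let f : ℂ → ℂ be holomorphic on U. Assume that for every closed continuously differentiable path γ : ℝ → ℂ with γ([0,1]) ⊆ U and γ(0) = γ(1), the integral ∫_{t=0}^{1} f(γ(t)) · γ'(t) dt has vanishing real part. Then there exists a function u : ℂ → ℝ which is harmonic on U (C² with vanishing Laplacian on U) such that f(z) = ∂ₓu(z) − i·∂ᵧu(z) for all z ∈ U, where ∂ₓu(z) = (fderiv ℝ u z)(1) and ∂ᵧu(z) = (fderiv ℝ u z)(i). -/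
/-!
The potential is `u w = Re ∫ f dz` along any path from a fixed base point to `w`; the hypothesis on
periods makes this independent of the path. The only subtlety is that periods are controlled for
`C¹` loops only, while concatenating `C¹` paths creates corners. This is avoided by working with
paths that rest at their end points (`IsFlatPath`): they can be concatenated (`IsFlatPath.trans`)
and reversed (`IsFlatPath.symm`) without losing smoothness, and segments can be parametrized in this
way (`exists_isFlatPath_of_ball`). On a disc in `U` the function `f` has a holomorphic primitive
`F`, and there `u` differs from `Re F` by a constant (`exists_local_potential`). Hence
`du = Re (f dz)` on `U`, from which the formula for `f` and the harmonicity of `u` follow by the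
Cauchy–Riemann equations.
-/

/-- The Laplacian `∂²u/∂x² + ∂²u/∂y²` of a function `u : ℂ → ℝ`, with `ℂ` regarded as a
two-dimensional real vector space (directions `1` and `I`). -/
noncomputable def laplacian (u : ℂ → ℝ) (z : ℂ) : ℝ :=
  fderiv ℝ (fun w => fderiv ℝ u w 1) z 1
    + fderiv ℝ (fun w => fderiv ℝ u w Complex.I) z Complex.I

/-- `u : ℂ → ℝ` is harmonic on `U` if it is `C²` on `U` and its Laplacian vanishes at
every point of `U`. -/
def HarmonicOnSet (u : ℂ → ℝ) (U : Set ℂ) : Prop :=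
  ContDiffOn ℝ 2 u U ∧ ∀ z ∈ U, laplacian u z = 0

open Set Filter Topology

/-- A `C¹` path in `U` parametrized by all of `ℝ`, which rests at `a` for times `t ≤ 0` and
at `b` for times `t ≥ 1`. -/
structure IsFlatPath (U : Set ℂ) (γ : ℝ → ℂ) (a b : ℂ) : Prop where
  contDiff : ContDiff ℝ 1 γ
  mem : ∀ t, γ t ∈ U
  left : ∀ t ≤ 0, γ t = a
  right : ∀ t, 1 ≤ t → γ t = b

/-- The integral of `f dz` along `γ` over the time interval `[0, 1]`. -/
noncomputable def pathIntegral (f : ℂ → ℂ) (γ : ℝ → ℂ) : ℂ :=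
  ∫ t in (0:ℝ)..1, f (γ t) * deriv γ t

section Paths

variable {U : Set ℂ} {f : ℂ → ℂ}

lemma IsFlatPath.symm {γ : ℝ → ℂ} {a b : ℂ} (h : IsFlatPath U γ a b) :
    IsFlatPath U (fun t => γ (1 - t)) b a ∧
      pathIntegral f (fun t => γ (1 - t)) = - pathIntegral f γ := by
  refine ⟨⟨h.contDiff.comp (by fun_prop), fun t => h.mem _, fun t ht => h.right _ (by linarith),
    fun t ht => h.left _ (by linarith)⟩, ?_⟩
  unfold pathIntegral
  have := intervalIntegral.integral_comp_sub_left (a := 0) (b := 1)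
    (fun s => -(f (γ s) * deriv γ s)) 1
  simp only [sub_self, sub_zero, intervalIntegral.integral_neg] at this
  rw [← this, ← intervalIntegral.integral_neg]
  simp only [deriv_comp_const_sub, mul_neg]

lemma IsFlatPath.trans {γ₁ γ₂ : ℝ → ℂ} {a b c : ℂ} (hf : ContinuousOn f U)
    (h₁ : IsFlatPath U γ₁ a b) (h₂ : IsFlatPath U γ₂ b c) :
    ∃ γ, IsFlatPath U γ a c ∧ pathIntegral f γ = pathIntegral f γ₁ + pathIntegral f γ₂ := by
  -- One of the first two summands always cancels against `b`, so no gluing of pieces is needed.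
  set γ : ℝ → ℂ := fun t => γ₁ (2 * t) + γ₂ (2 * t - 1) - b with hγ
  have hl : ∀ t ≤ 1 / 2, γ t = γ₁ (2 * t) := fun t ht => by
    simp [hγ, h₂.left (2 * t - 1) (by linarith)]
  have hr : ∀ t, 1 / 2 ≤ t → γ t = γ₂ (2 * t - 1) := fun t ht => by
    simp [hγ, h₁.right (2 * t) (by linarith)]
  have hc : ContDiff ℝ 1 γ :=
    ((h₁.contDiff.comp (by fun_prop)).add (h₂.contDiff.comp (by fun_prop))).sub contDiff_const
  have hmem : ∀ t, γ t ∈ U := fun t => by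
    rcases le_total t (1 / 2) with ht | ht
    · exact hl t ht ▸ h₁.mem _
    · exact hr t ht ▸ h₂.mem _
  refine ⟨γ, ⟨hc, hmem, fun t ht => ?_, fun t ht => ?_⟩, ?_⟩
  · rw [hl t (by linarith), h₁.left _ (by linarith)]
  · rw [hr t (by linarith), h₂.right _ (by linarith)]
  have hcont : Continuous fun t => f (γ t) * deriv γ t :=
    (hf.comp_continuous hc.continuous hmem).mul (hc.continuous_deriv le_rfl)
  unfold pathIntegral
  rw [← intervalIntegral.integral_add_adjacent_intervals (b := 1 / 2)
    (hcont.intervalIntegrable _ _) (hcont.intervalIntegrable _ _)]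
  congr 1
  · have := intervalIntegral.smul_integral_comp_mul_left (a := 0) (b := 1 / 2)
      (fun s => f (γ₁ s) * deriv γ₁ s) 2
    norm_num at this
    rw [← this, ← intervalIntegral.integral_const_mul]
    apply intervalIntegral.integral_congr_Ioo_of_le (by norm_num)
    intro t ht
    have he : γ =ᶠ[𝓝 t] fun t => γ₁ (2 * t) := by
      filter_upwards [Iio_mem_nhds ht.2] with s hs using hl s hs.le
    simp only [he.deriv_eq, he.eq_of_nhds, deriv_comp_mul_left, Complex.real_smul]
    push_cast
    ring
  · have := intervalIntegral.smul_integral_comp_mul_sub (a := 1 / 2) (b := 1)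
      (fun s => f (γ₂ s) * deriv γ₂ s) 2 1
    norm_num at this
    rw [← this, ← intervalIntegral.integral_const_mul]
    apply intervalIntegral.integral_congr_Ioo_of_le (by norm_num)
    intro t ht
    have he : γ =ᶠ[𝓝 t] fun t => γ₂ (2 * t - 1) := by
      filter_upwards [Ioi_mem_nhds ht.1] with s hs using hr s (le_of_lt hs)
    have hd := deriv_comp_mul_left 2 (fun s => γ₂ (s - 1)) t
    rw [deriv_comp_sub_const] at hd
    simp only [he.deriv_eq, he.eq_of_nhds, hd, Complex.real_smul]
    push_cast
    ring

/-- Two points of a disc are joined by a flat path along the segment between them; the integral of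
`f` along it is computed by a primitive of `f`. -/
lemma exists_isFlatPath_of_ball {F : ℂ → ℂ} {z : ℂ} {r : ℝ} (hf : ContinuousOn f U)
    (hball : Metric.ball z r ⊆ U) (hF : ∀ w ∈ Metric.ball z r, HasDerivAt F (f w) w)
    {a b : ℂ} (ha : a ∈ Metric.ball z r) (hb : b ∈ Metric.ball z r) :
    ∃ γ, IsFlatPath U γ a b ∧ pathIntegral f γ = F b - F a := by
  set γ : ℝ → ℂ := fun t => a + Real.smoothTransition t • (b - a) with hγ
  have hmem : ∀ t, γ t ∈ Metric.ball z r := fun t =>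
    (convex_ball z r).add_smul_sub_mem ha hb
      ⟨Real.smoothTransition.nonneg t, Real.smoothTransition.le_one t⟩
  have hc : ContDiff ℝ 1 γ :=
    contDiff_const.add ((Real.smoothTransition.contDiff (n := 1)).smul contDiff_const)
  have h0 : ∀ t ≤ 0, γ t = a := fun t ht => by
    simp [hγ, Real.smoothTransition.zero_of_nonpos ht]
  have h1 : ∀ t, 1 ≤ t → γ t = b := fun t ht => by
    simp [hγ, Real.smoothTransition.one_of_one_le ht]
  refine ⟨γ, ⟨hc, fun t => hball (hmem t), h0, h1⟩, ?_⟩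
  have hcont : Continuous fun t => f (γ t) * deriv γ t :=
    (hf.comp_continuous hc.continuous fun t => hball (hmem t)).mul (hc.continuous_deriv le_rfl)
  have := intervalIntegral.integral_eq_sub_of_hasDerivAt (a := 0) (b := 1)
    (f := fun t => F (γ t)) (f' := fun t => f (γ t) * deriv γ t)
    (fun t _ => (hF _ (hmem t)).comp t ((hc.differentiable one_ne_zero) t).hasDerivAt)
    (hcont.intervalIntegrable _ _)
  rw [pathIntegral, this, h0 0 le_rfl, h1 1 le_rfl]

/-- Path integration yields a single-valued function `u` which on small discs coincides, up to an
additive constant, with the real part of a primitive of `f`. -/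
lemma exists_local_potential (hU : IsOpen U) (hUconn : IsConnected U)
    (hf : DifferentiableOn ℂ f U)
    (hper : ∀ γ : ℝ → ℂ, ContDiffOn ℝ 1 γ (Set.Icc 0 1) →
      γ '' Set.Icc (0 : ℝ) 1 ⊆ U → γ 0 = γ 1 →
      (∫ t in (0:ℝ)..1, f (γ t) * deriv γ t).re = 0) :
    ∃ u : ℂ → ℝ, ∀ z ∈ U, ∃ F : ℂ → ℂ, ∃ c : ℝ, ∀ᶠ w in 𝓝 z,
      HasDerivAt F (f w) w ∧ u w = (F w).re + c := by
  have hdisc : ∀ z ∈ U, ∃ r > 0, Metric.ball z r ⊆ U ∧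
      ∃ F : ℂ → ℂ, ∀ w ∈ Metric.ball z r, HasDerivAt F (f w) w := fun z hz => by
    obtain ⟨r, hr, hball⟩ := Metric.isOpen_iff.1 hU z hz
    exact ⟨r, hr, hball, (hf.mono hball).isExactOn_ball⟩
  have hjoin : ∀ a ∈ U, ∀ b ∈ U, ∃ γ, IsFlatPath U γ a b := by
    intro a ha b hb
    refine hUconn.isPreconnected.induction₂ (fun a b => ∃ γ, IsFlatPath U γ a b) ?_ ?_ ?_ ha hb
    · intro z hz
      obtain ⟨r, hr, hball, F, hF⟩ := hdisc z hz
      filter_upwards [mem_nhdsWithin_of_mem_nhds (Metric.ball_mem_nhds z hr)] with w hw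
      obtain ⟨γ, hγ, -⟩ :=
        exists_isFlatPath_of_ball hf.continuousOn hball hF (Metric.mem_ball_self hr) hw
      exact ⟨γ, hγ⟩
    · rintro a b c - - - ⟨γ₁, h₁⟩ ⟨γ₂, h₂⟩
      obtain ⟨γ, hγ, -⟩ := h₁.trans hf.continuousOn h₂
      exact ⟨γ, hγ⟩
    · rintro a b - - ⟨γ, hγ⟩
      exact ⟨_, (hγ.symm (f := f)).1⟩
  have hindep : ∀ {a b γ₁ γ₂}, IsFlatPath U γ₁ a b → IsFlatPath U γ₂ a b →
      (pathIntegral f γ₁).re = (pathIntegral f γ₂).re := by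
    intro a b γ₁ γ₂ h₁ h₂
    obtain ⟨h₂', hI⟩ := h₂.symm (f := f)
    obtain ⟨γ, hγ, hJ⟩ := h₁.trans hf.continuousOn h₂'
    have h := hper γ hγ.contDiff.contDiffOn (by rintro _ ⟨t, -, rfl⟩; exact hγ.mem t)
      (by rw [hγ.left 0 le_rfl, hγ.right 1 le_rfl])
    change (pathIntegral f γ).re = 0 at h
    rw [hJ, hI, Complex.add_re, Complex.neg_re] at h
    linarith
  obtain ⟨z₀, hz₀⟩ := hUconn.nonempty
  choose! Γ hΓ using hjoin z₀ hz₀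
  refine ⟨fun w => (pathIntegral f (Γ w)).re, fun z hz => ?_⟩
  obtain ⟨r, hr, hball, F, hF⟩ := hdisc z hz
  refine ⟨F, (pathIntegral f (Γ z)).re - (F z).re, ?_⟩
  filter_upwards [Metric.ball_mem_nhds z hr] with w hw
  refine ⟨hF w hw, ?_⟩
  obtain ⟨γ, hγ, hI⟩ :=
    exists_isFlatPath_of_ball hf.continuousOn hball hF (Metric.mem_ball_self hr) hw
  obtain ⟨γ', hγ', hJ⟩ := (hΓ z hz).trans hf.continuousOn hγ
  rw [hindep (hΓ w (hball hw)) hγ', hJ, hI, Complex.add_re, Complex.sub_re]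
  ring

end Paths

/-- If `f` is holomorphic on an open connected set `U ⊆ ℂ` and all of
its periods over closed `C¹` paths in `U` have vanishing real part, then `f = ∂ₓu - i·∂ᵧu`
for some function `u : ℂ → ℝ` harmonic on `U`. -/
theorem holomorphic_with_imaginary_periods_has_harmonic_potential
    (U : Set ℂ) (hU : IsOpen U) (hUconn : IsConnected U)
    (f : ℂ → ℂ) (hf : DifferentiableOn ℂ f U)
    (hper : ∀ γ : ℝ → ℂ, ContDiffOn ℝ 1 γ (Set.Icc 0 1) →
      γ '' Set.Icc (0 : ℝ) 1 ⊆ U → γ 0 = γ 1 →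
      (∫ t in (0:ℝ)..1, f (γ t) * deriv γ t).re = 0) :
    ∃ u : ℂ → ℝ, HarmonicOnSet u U ∧
      ∀ z ∈ U,
        f z = (fderiv ℝ u z 1 : ℂ) - Complex.I * (fderiv ℝ u z Complex.I : ℂ) := by
  obtain ⟨u, hu⟩ := exists_local_potential hU hUconn hf hper
  -- `du = Re (f dz)`
  have hfd : ∀ z ∈ U, ∀ v, fderiv ℝ u z v = (f z * v).re := by
    intro z hz v
    obtain ⟨F, c, hF⟩ := hu z hz
    have he : u =ᶠ[𝓝 z] fun w => Complex.reCLM (F w) + c := hF.mono fun w hw => hw.2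
    have hd : HasFDerivAt (fun w => Complex.reCLM (F w) + c) _ z :=
      ((Complex.reCLM.hasFDerivAt).comp z
        (hF.self_of_nhds.1.hasFDerivAt.restrictScalars ℝ)).add_const c
    rw [he.fderiv_eq, hd.fderiv]
    simp [mul_comm]
  refine ⟨u, ⟨fun z hz => ?_, fun z hz => ?_⟩, fun z hz => ?_⟩
  · obtain ⟨F, c, hF⟩ := hu z hz
    have he : u =ᶠ[𝓝 z] fun w => Complex.reCLM (F w) + c := hF.mono fun w hw => hw.2
    have hFa : AnalyticAt ℂ F z := Complex.analyticAt_iff_eventually_differentiableAt.2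
      (hF.mono fun w hw => hw.1.differentiableAt)
    have hFc : ContDiffAt ℝ 2 F z := hFa.contDiffAt.restrict_scalars ℝ
    exact (((Complex.reCLM.contDiff.contDiffAt.comp z hFc).add
      contDiffAt_const).congr_of_eventuallyEq he).contDiffWithinAt
  · have hfz :=
      ((hf z hz).differentiableAt (hU.mem_nhds hz)).hasDerivAt.hasFDerivAt.restrictScalars ℝ
    have key : ∀ v, fderiv ℝ (fun w => fderiv ℝ u w v) z v = (deriv f z * v * v).re := by
      intro v
      have he : (fun w => fderiv ℝ u w v) =ᶠ[𝓝 z] fun w => Complex.reCLM (f w * v) := by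
        filter_upwards [hU.mem_nhds hz] with w hw using hfd w hw v
      have hd : HasFDerivAt (fun w => Complex.reCLM (f w * v)) _ z :=
        (Complex.reCLM.hasFDerivAt).comp z (hfz.mul_const v)
      rw [he.fderiv_eq, hd.fderiv]
      simp
      ring
    rw [laplacian, key, key, mul_assoc _ Complex.I, Complex.I_mul_I]
    simp
  · rw [hfd z hz, hfd z hz]
    apply Complex.ext <;> simp
end

section
/- Let E be a complex Banach space, U ⊆ E and V ⊆ ℂ open, F : E × ℂ → ℂ holomorphic on U ×ˢ V, and K ⊆ V a compact set. Then the set {u ∈ U : every zero in K of the function z ↦ F(u,z) is simple}, i.e., {u ∈ U : ∀ z ∈ K, F(u,z) = 0 → (derivative of z ↦ F(u,z) at z) ≠ 0}, is open in E. -/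
/-!
The condition "`F (u, z) ≠ 0` or `∂F/∂z (u, z) ≠ 0`" is open in the pair `(u, z)` once `F` and
`∂F/∂z` are jointly continuous on `U ×ˢ V`; compactness of `K` (the tube lemma) then turns
"for all `z ∈ K`" into an open condition on `u`.

Joint continuity of `∂F/∂z` (`continuousAt_partial_deriv`) follows from Cauchy's estimate: as
`p → p₀`, the translates `w ↦ F (p.1, p.2 + w)` converge uniformly on a small closed disc about
`0`, again by the tube lemma, so their derivatives at `0` converge.
-/

open Filter Topology Metric

/-- A function that is complex differentiable near `p₀` has a continuous partial derivative in
the one-dimensional variable at `p₀`. -/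
theorem continuousAt_partial_deriv {E : Type*} [NormedAddCommGroup E] [NormedSpace ℂ E]
    {F : E × ℂ → ℂ} {p₀ : E × ℂ} (hF : ∀ᶠ p in 𝓝 p₀, DifferentiableAt ℂ F p) :
    ContinuousAt (fun p : E × ℂ => deriv (fun w => F (p.1, w)) p.2) p₀ := by
  have hshift : Continuous (fun q : (E × ℂ) × ℂ => (q.1.1, q.1.2 + q.2)) := by fun_prop
  obtain ⟨r, hr, hdiff⟩ : ∃ r > 0, ∀ w ∈ closedBall (0 : ℂ) r,
      ∀ᶠ p in 𝓝 (p₀.1, p₀.2 + w), DifferentiableAt ℂ F p := by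
    have h : ∀ᶠ w in 𝓝 (0 : ℂ), ∀ᶠ p in 𝓝 (p₀.1, p₀.2 + w), DifferentiableAt ℂ F p := by
      have hc : Tendsto (fun w : ℂ => (p₀.1, p₀.2 + w)) (𝓝 0) (𝓝 p₀) := by
        have : Continuous (fun w : ℂ => (p₀.1, p₀.2 + w)) := by fun_prop
        simpa using this.tendsto 0
      exact hc.eventually hF.eventually_nhds
    obtain ⟨r, hr, h⟩ := nhds_basis_closedBall.eventually_iff.1 h
    exact ⟨r, hr, fun w hw => h hw⟩
  have hcomp : IsCompact (closedBall (0 : ℂ) r) := isCompact_closedBall 0 r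
  have hD : ∀ᶠ p in 𝓝 p₀, ∀ w ∈ closedBall (0 : ℂ) r,
      DifferentiableAt ℂ F (p.1, p.2 + w) := by
    refine hcomp.eventually_forall_of_forall_eventually fun w hw => ?_
    exact (hshift.tendsto (p₀, w)).eventually (hdiff w hw)
  have hsec : ∀ p : E × ℂ, ∀ w, DifferentiableAt ℂ F (p.1, p.2 + w) →
      DifferentiableAt ℂ (fun w => F (p.1, p.2 + w)) w := by
    intro p w h
    exact h.comp w (f := fun w : ℂ => (p.1, p.2 + w)) (by fun_prop)
  have hderiv : ∀ p : E × ℂ, deriv (fun w => F (p.1, w)) p.2 =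
      deriv (fun w => F (p.1, p.2 + w)) 0 := by
    intro p
    rw [deriv_comp_const_add (fun w => F (p.1, w)), add_zero]
  rw [ContinuousAt, Metric.tendsto_nhds]
  intro ε hε
  have hU : ∀ᶠ p in 𝓝 p₀, ∀ w ∈ closedBall (0 : ℂ) r,
      ‖F (p.1, p.2 + w) - F (p₀.1, p₀.2 + w)‖ < ε / 2 * r := by
    refine hcomp.eventually_forall_of_forall_eventually fun w hw => ?_
    have hFc : ContinuousAt F (p₀.1, p₀.2 + w) := (hdiff w hw).self_of_nhds.continuousAt
    have h1 : Tendsto (fun q : (E × ℂ) × ℂ => F (q.1.1, q.1.2 + q.2)) (𝓝 (p₀, w))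
        (𝓝 (F (p₀.1, p₀.2 + w))) := hFc.tendsto.comp (hshift.tendsto (p₀, w))
    have hs : Continuous (fun q : (E × ℂ) × ℂ => (p₀.1, p₀.2 + q.2)) := by fun_prop
    have h2 : Tendsto (fun q : (E × ℂ) × ℂ => F (p₀.1, p₀.2 + q.2)) (𝓝 (p₀, w))
        (𝓝 (F (p₀.1, p₀.2 + w))) := hFc.tendsto.comp (hs.tendsto (p₀, w))
    have h3 := (h1.sub h2).norm
    rw [sub_self, norm_zero] at h3
    exact h3.eventually (gt_mem_nhds (by positivity))
  have hD₀ := hD.self_of_nhds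
  filter_upwards [hD, hU] with p hp hpU
  have h0 : (0 : ℂ) ∈ closedBall (0 : ℂ) r := mem_closedBall_self hr.le
  rw [dist_eq_norm, hderiv, hderiv,
    ← deriv_fun_sub (hsec p 0 (hp 0 h0)) (hsec p₀ 0 (hD₀ 0 h0))]
  have hle := Complex.norm_deriv_le_of_forall_mem_sphere_norm_le (c := 0) (R := r)
    (C := ε / 2 * r) (f := fun w => F (p.1, p.2 + w) - F (p₀.1, p₀.2 + w)) hr
    (DifferentiableOn.diffContOnCl fun w hw => by
      rw [closure_ball _ hr.ne'] at hw
      exact ((hsec p w (hp w hw)).sub (hsec p₀ w (hD₀ w hw))).differentiableWithinAt)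
    (fun w hw => (hpU w (sphere_subset_closedBall hw)).le)
  rw [mul_div_cancel_right₀ _ hr.ne'] at hle
  exact hle.trans_lt (half_lt_self hε)

/-- Let `E` be a complex Banach space, `U ⊆ E` and `V ⊆ ℂ` open,
`F : E × ℂ → ℂ` holomorphic on `U ×ˢ V`, and `K ⊆ V` compact. Then the set of parameters
`u ∈ U` for which every zero of `z ↦ F (u, z)` in `K` is simple is open in `E`. -/
theorem simple_zero_condition_is_open
    (E : Type*) [NormedAddCommGroup E] [NormedSpace ℂ E] [CompleteSpace E]
    (U : Set E) (V : Set ℂ) (hU : IsOpen U) (hV : IsOpen V)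
    (F : E × ℂ → ℂ) (hF : DifferentiableOn ℂ F (U ×ˢ V))
    (K : Set ℂ) (hK : IsCompact K) (hKV : K ⊆ V) :
    IsOpen {u ∈ U | ∀ z ∈ K, F (u, z) = 0 → deriv (fun w => F (u, w)) z ≠ 0} := by
  rw [isOpen_iff_mem_nhds]
  rintro u ⟨hu, hsimple⟩
  refine (hU.eventually_mem hu).and (hK.eventually_forall_of_forall_eventually fun z hz => ?_)
  have hd : ∀ᶠ p in 𝓝 (u, z), DifferentiableAt ℂ F p := by
    filter_upwards [(hU.prod hV).mem_nhds ⟨hu, hKV hz⟩] with p hp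
    exact hF.differentiableAt ((hU.prod hV).mem_nhds hp)
  by_cases h : F (u, z) = 0
  · filter_upwards [(continuousAt_partial_deriv hd).eventually_ne (hsimple z hz h)] with p hp _
    exact hp
  · filter_upwards [hd.self_of_nhds.continuousAt.eventually_ne h] with p hp h0
    exact absurd h0 hp
end
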